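/- Let 0 < α < 1. There exists a constant C_α > 0 with the following property: for every complex Hilbert space H, every family (P_n)_{n ∈ ℤ} of mutually orthogonal orthogonal projections on H (P_n* = P_n = P_n², P_m P_n = 0 for m ≠ n) such that ∑_{n ∈ ℤ} P_n x converges to x for every x ∈ H, and all bounded operators a and b on H satisfying P_m ∘ b ∘ P_n = (m − n) · (P_m ∘ a ∘ P_n) for all m, n ∈ ℤ (i.e. b is the commutator [T, a] where T = ∑_n n P_n), there exists a bounded operator c on H with P_m ∘ c ∘ P_n = (|m|^α − |n|^α) · (P_m ∘ a ∘ P_n) for all m, n ∈ ℤ (i.e. c = [|T|^α, a]) and ‖c‖ ≤ C_α · ‖b‖. -/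

import Mathlib

universe u

section

open MeasureTheory Set Filter Topology Real

/-- A bounded family of operators on a Hilbert space has a weak operator limit along every
ultrafilter. -/
lemma exists_weak_limit_of_norm_le {H : Type*} [NormedAddCommGroup H] [InnerProductSpace ℂ H]
    [CompleteSpace H] {ι : Type*} (U : Ultrafilter ι) (c : ι → H →L[ℂ] H) (K : ℝ)
    (hK : ∀ i, ‖c i‖ ≤ K) :
    ∃ d : H →L[ℂ] H, ‖d‖ ≤ K ∧
      ∀ x y, Tendsto (fun i => inner ℂ (c i x) y) U (𝓝 (inner ℂ (d x) y)) := by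
  have hK0 : 0 ≤ K := by
    obtain ⟨i⟩ : Nonempty ι := Filter.nonempty_of_neBot (U : Filter ι)
    exact (norm_nonneg _).trans (hK i)
  have hbd : ∀ x y i, ‖inner ℂ (c i x) y‖ ≤ K * ‖x‖ * ‖y‖ := fun x y i =>
    (norm_inner_le_norm _ _).trans <| by
      gcongr
      exact (c i).le_of_opNorm_le (hK i) x
  have hlim : ∀ x y, ∃ z, ‖z‖ ≤ K * ‖x‖ * ‖y‖ ∧
      Tendsto (fun i => inner ℂ (c i x) y) U (𝓝 z) := fun x y => by
    obtain ⟨z, hz, hz'⟩ := (isCompact_closedBall (0 : ℂ) (K * ‖x‖ * ‖y‖)).ultrafilter_le_nhds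
      (U.map fun i => inner ℂ (c i x) y) (by
        simp only [le_principal_iff, Ultrafilter.coe_map, mem_map]
        filter_upwards with i
        simpa using hbd x y i)
    exact ⟨z, by simpa using hz, hz'⟩
  choose B hB hBt using hlim
  let L : H →ₗ⋆[ℂ] H →ₗ[ℂ] ℂ := LinearMap.mk₂'ₛₗ (starRingEnd ℂ) (RingHom.id ℂ) B
    (fun x₁ x₂ y => tendsto_nhds_unique (hBt _ _)
      (((hBt x₁ y).add (hBt x₂ y)).congr fun i => by rw [map_add, inner_add_left]))
    (fun a x y => tendsto_nhds_unique (hBt _ _)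
      (((hBt x y).const_mul (starRingEnd ℂ a)).congr fun i => by rw [map_smul, inner_smul_left]))
    (fun x y₁ y₂ => tendsto_nhds_unique (hBt _ _)
      (((hBt x y₁).add (hBt x y₂)).congr fun i => by rw [inner_add_right]))
    (fun a x y => tendsto_nhds_unique (hBt _ _)
      (((hBt x y).const_mul a).congr fun i => by rw [inner_smul_right]))
  let d := InnerProductSpace.continuousLinearMapOfBilin (L.mkContinuous₂ K hB)
  have hd : ∀ x y, inner ℂ (d x) y = B x y := fun x y =>
    InnerProductSpace.continuousLinearMapOfBilin_apply _ x y
  refine ⟨d, d.opNorm_le_bound hK0 fun x => ?_, fun x y => hd x y ▸ hBt x y⟩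
  have h := hB x (d x)
  rw [← hd, inner_self_eq_norm_sq_to_K, norm_pow, RCLike.norm_ofReal, abs_norm, sq] at h
  rcases (norm_nonneg (d x)).eq_or_lt with h0 | h0
  · rw [← h0]; positivity
  · exact le_of_mul_le_mul_right h h0

/-- An operator is bounded by `K` as soon as its sesquilinear form is bounded by the
arithmetic mean `K * (‖x‖ ^ 2 + ‖y‖ ^ 2) / 2`. -/
lemma opNorm_le_of_inner_le_add_sq {H : Type*} [NormedAddCommGroup H] [InnerProductSpace ℂ H]
    (c : H →L[ℂ] H) {K : ℝ} (hK : 0 ≤ K)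
    (h : ∀ x y, ‖inner ℂ x (c y)‖ ≤ K * (‖x‖ ^ 2 + ‖y‖ ^ 2) / 2) : ‖c‖ ≤ K := by
  refine c.opNorm_le_of_unit_norm hK fun y hy => ?_
  by_cases h0 : c y = 0
  · simpa [h0]
  · have := h ((‖c y‖⁻¹ : ℂ) • c y) y
    have hn : ‖c y‖ ≠ 0 := by simpa using h0
    rw [inner_smul_left, inner_self_eq_norm_sq_to_K, norm_mul, norm_smul] at this
    simp only [hy, norm_pow, norm_inv, RCLike.norm_conj, RCLike.norm_ofReal, Complex.norm_real,
      norm_norm, abs_norm] at this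
    field_simp at this
    norm_num at this
    linarith

/-- A family of mutually orthogonal self-adjoint projections. -/
structure IsOrthogonalProjections {H : Type*} [NormedAddCommGroup H] [InnerProductSpace ℂ H]
    [CompleteSpace H] (P : ℤ → H →L[ℂ] H) : Prop where
  adjoint_eq : ∀ n, ContinuousLinearMap.adjoint (P n) = P n
  idem : ∀ n, P n ∘L P n = P n
  orthogonal : ∀ m n, m ≠ n → P m ∘L P n = 0

namespace IsOrthogonalProjections

variable {H : Type*} [NormedAddCommGroup H] [InnerProductSpace ℂ H] [CompleteSpace H]
  {P : ℤ → H →L[ℂ] H}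

lemma inner_left (hP : IsOrthogonalProjections P) (n : ℤ) (x y : H) :
    inner ℂ (P n x) y = inner ℂ x (P n y) := by
  rw [← ContinuousLinearMap.adjoint_inner_left, hP.adjoint_eq]

lemma apply_apply (hP : IsOrthogonalProjections P) (m n : ℤ) (x : H) :
    P m (P n x) = if m = n then P n x else 0 := by
  split_ifs with h
  · subst h; exact DFunLike.congr_fun (hP.idem m) x
  · exact DFunLike.congr_fun (hP.orthogonal m n h) x

lemma norm_sum_smul_sq (hP : IsOrthogonalProjections P) (F : Finset ℤ) (w : ℤ → ℝ) (x : H) :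
    ‖∑ m ∈ F, (w m : ℂ) • P m x‖ ^ 2 = ∑ m ∈ F, w m ^ 2 * ‖P m x‖ ^ 2 := by
  induction F using Finset.induction_on with
  | empty => simp
  | insert k F hk ih =>
    have h0 : inner ℂ ((w k : ℂ) • P k x) (∑ m ∈ F, (w m : ℂ) • P m x) = 0 := by
      rw [inner_sum]
      refine Finset.sum_eq_zero fun m hm => ?_
      rw [inner_smul_left, inner_smul_right, hP.inner_left, hP.apply_apply,
        if_neg (by rintro rfl; exact hk hm)]
      simp
    rw [Finset.sum_insert hk, Finset.sum_insert hk, norm_add_sq (𝕜 := ℂ), h0, ih, norm_smul]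
    simp [mul_pow]

lemma sum_norm_sq_le (hP : IsOrthogonalProjections P) (F : Finset ℤ) (x : H) :
    ∑ m ∈ F, ‖P m x‖ ^ 2 ≤ ‖x‖ ^ 2 := by
  have h := hP.norm_sum_smul_sq F 1 x
  simp only [Pi.one_apply, Complex.ofReal_one, one_smul, one_pow, one_mul] at h
  have h2 : inner ℂ x (∑ m ∈ F, P m x) = ((∑ m ∈ F, ‖P m x‖ ^ 2 : ℝ) : ℂ) := by
    rw [inner_sum, Complex.ofReal_sum]
    refine Finset.sum_congr rfl fun m _ => ?_
    have : P m x = P m (P m x) := by simp [hP.apply_apply]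
    rw [this, ← hP.inner_left, inner_self_eq_norm_sq_to_K, ← this]
    simp
  have h3 := norm_inner_le_norm (𝕜 := ℂ) x (∑ m ∈ F, P m x)
  have h4 : 0 ≤ ∑ m ∈ F, ‖P m x‖ ^ 2 := by positivity
  rw [h2, Complex.norm_real, Real.norm_of_nonneg h4, ← h] at h3
  rw [← h]
  rcases (norm_nonneg (∑ m ∈ F, P m x)).eq_or_lt with h0 | h0
  · rw [← h0, zero_pow two_ne_zero]
    positivity
  · rw [sq] at h3
    gcongr
    exact le_of_mul_le_mul_right h3 h0

end IsOrthogonalProjections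

/-- `M` is a bounded Schur multiplier, uniformly over all families of mutually orthogonal
projections indexed by `ℤ`. -/
def IsSchurMultiplier (M : ℤ → ℤ → ℝ) : Prop :=
  ∃ K : ℝ, 0 ≤ K ∧ ∀ (H : Type u) [NormedAddCommGroup H] [InnerProductSpace ℂ H]
    [CompleteSpace H] (P : ℤ → H →L[ℂ] H), IsOrthogonalProjections P →
    ∀ b : H →L[ℂ] H, ∃ c : H →L[ℂ] H,
      (∀ m n, P m ∘L c ∘L P n = (M m n : ℂ) • (P m ∘L b ∘L P n)) ∧ ‖c‖ ≤ K * ‖b‖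

namespace IsSchurMultiplier

lemma add {M N : ℤ → ℤ → ℝ} (hM : IsSchurMultiplier.{u} M) (hN : IsSchurMultiplier.{u} N) :
    IsSchurMultiplier.{u} fun m n => M m n + N m n := by
  obtain ⟨K, hK, h⟩ := hM
  obtain ⟨L, hL, h'⟩ := hN
  refine ⟨K + L, by positivity, fun H _ _ _ P hP b => ?_⟩
  obtain ⟨c, hc, hcK⟩ := h H P hP b
  obtain ⟨d, hd, hdL⟩ := h' H P hP b
  refine ⟨c + d, fun m n => ?_, (norm_add_le _ _).trans (by linarith)⟩
  rw [ContinuousLinearMap.add_comp, ContinuousLinearMap.comp_add, hc, hd, ← add_smul]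
  push_cast
  rfl

lemma const_mul {M : ℤ → ℤ → ℝ} (hM : IsSchurMultiplier.{u} M) (r : ℝ) :
    IsSchurMultiplier.{u} fun m n => r * M m n := by
  obtain ⟨K, hK, h⟩ := hM
  refine ⟨|r| * K, by positivity, fun H _ _ _ P hP b => ?_⟩
  obtain ⟨c, hc, hcK⟩ := h H P hP b
  refine ⟨(r : ℂ) • c, fun m n => ?_, ?_⟩
  · rw [ContinuousLinearMap.smul_comp, ContinuousLinearMap.comp_smul, hc, smul_smul]
    push_cast
    rfl
  · rw [norm_smul, Complex.norm_real, Real.norm_eq_abs, mul_assoc]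
    gcongr

/-- The finite truncations of a kernel `∫ u m * v n` are uniformly bounded Schur multipliers. -/
lemma norm_sum_le {X : Type*} [MeasurableSpace X] {μ : Measure X} {u v : ℤ → X → ℝ} {K : ℝ}
    (hu : ∀ m, MemLp (u m) 2 μ) (hv : ∀ m, MemLp (v m) 2 μ)
    (huK : ∀ m, ∫ t, u m t ^ 2 ∂μ ≤ K) (hvK : ∀ m, ∫ t, v m t ^ 2 ∂μ ≤ K)
    {H : Type*} [NormedAddCommGroup H] [InnerProductSpace ℂ H] [CompleteSpace H]
    {P : ℤ → H →L[ℂ] H} (hP : IsOrthogonalProjections P) (b : H →L[ℂ] H) (F : Finset ℤ) :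
    ‖∑ m ∈ F, ∑ n ∈ F, ((∫ t, u m t * v n t ∂μ : ℝ) : ℂ) • (P m ∘L b ∘L P n)‖ ≤ K * ‖b‖ := by
  have hK : 0 ≤ K := (integral_nonneg fun t => sq_nonneg (u 0 t)).trans (huK 0)
  have hu2 := fun m => (hu m).integrable_sq
  have hv2 := fun m => (hv m).integrable_sq
  have huv : ∀ m n, Integrable (fun t => u m t * v n t) μ := fun m n =>
    (hu m).integrable_mul (hv n)
  refine opNorm_le_of_inner_le_add_sq _ (by positivity) fun x y => ?_
  have key : inner ℂ x ((∑ m ∈ F, ∑ n ∈ F, ((∫ t, u m t * v n t ∂μ : ℝ) : ℂ) •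
      (P m ∘L b ∘L P n)) y) = ∫ t, inner ℂ (∑ m ∈ F, (u m t : ℂ) • P m x)
        (b (∑ n ∈ F, (v n t : ℂ) • P n y)) ∂μ := by
    have : ∀ t, inner ℂ (∑ m ∈ F, (u m t : ℂ) • P m x) (b (∑ n ∈ F, (v n t : ℂ) • P n y)) =
        ∑ m ∈ F, ∑ n ∈ F, ((u m t * v n t : ℝ) : ℂ) * inner ℂ (P m x) (b (P n y)) := fun t => by
      rw [sum_inner]
      refine Finset.sum_congr rfl fun m _ => ?_
      rw [map_sum, inner_sum]
      refine Finset.sum_congr rfl fun n _ => ?_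
      rw [map_smul, inner_smul_left, inner_smul_right, Complex.conj_ofReal]
      push_cast
      ring
    simp_rw [this]
    have hint : ∀ m n, Integrable (fun t => ((u m t * v n t : ℝ) : ℂ) *
        inner ℂ (P m x) (b (P n y))) μ := fun m n => (huv m n).ofReal.mul_const _
    rw [integral_finsetSum _ fun m _ => integrable_finsetSum _ fun n _ => hint m n]
    simp only [_root_.sum_apply, _root_.smul_apply, inner_sum,
      inner_smul_right, ContinuousLinearMap.comp_apply]
    refine Finset.sum_congr rfl fun m _ => ?_
    rw [integral_finsetSum _ fun n _ => hint m n]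
    refine Finset.sum_congr rfl fun n _ => ?_
    rw [integral_mul_const, integral_complex_ofReal, hP.inner_left]
  rw [key]
  have hsum : ∀ (w : ℤ → X → ℝ) (z : H), (∀ m, Integrable (fun t => w m t ^ 2) μ) →
      (∀ m, ∫ t, w m t ^ 2 ∂μ ≤ K) →
      ∫ t, ∑ m ∈ F, w m t ^ 2 * ‖P m z‖ ^ 2 ∂μ ≤ K * ‖z‖ ^ 2 := fun w z hw hwK => by
    rw [integral_finsetSum _ fun m _ => (hw m).mul_const _]
    simp_rw [integral_mul_const]
    calc _ ≤ ∑ m ∈ F, K * ‖P m z‖ ^ 2 := by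
          gcongr with m _
          exact hwK m
      _ ≤ _ := by
          rw [← Finset.mul_sum]
          gcongr
          exact hP.sum_norm_sq_le F z
  have hiu : Integrable (fun t => ∑ m ∈ F, u m t ^ 2 * ‖P m x‖ ^ 2) μ :=
    integrable_finsetSum _ fun m _ => (hu2 m).mul_const _
  have hiv : Integrable (fun t => ∑ m ∈ F, v m t ^ 2 * ‖P m y‖ ^ 2) μ :=
    integrable_finsetSum _ fun m _ => (hv2 m).mul_const _
  calc _ ≤ ∫ t, ‖b‖ / 2 * (∑ m ∈ F, u m t ^ 2 * ‖P m x‖ ^ 2 +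
        ∑ m ∈ F, v m t ^ 2 * ‖P m y‖ ^ 2) ∂μ := by
        refine norm_integral_le_of_norm_le ((hiu.add hiv).const_mul _) (ae_of_all _ fun t => ?_)
        rw [← hP.norm_sum_smul_sq F (fun m => u m t), ← hP.norm_sum_smul_sq F (fun m => v m t)]
        set p := ∑ m ∈ F, (u m t : ℂ) • P m x
        set q := ∑ m ∈ F, (v m t : ℂ) • P m y
        calc _ ≤ ‖p‖ * ‖b q‖ := norm_inner_le_norm _ _
          _ ≤ ‖p‖ * (‖b‖ * ‖q‖) := by
            gcongr
            exact b.le_opNorm q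
          _ ≤ _ := by nlinarith [mul_nonneg (norm_nonneg b) (sq_nonneg (‖p‖ - ‖q‖))]
    _ ≤ _ := by
        rw [integral_const_mul, integral_add hiu hiv]
        have := mul_le_mul_of_nonneg_left (add_le_add (hsum u x hu2 huK) (hsum v y hv2 hvK))
          (show 0 ≤ ‖b‖ / 2 by positivity)
        linarith

lemma of_integral {X : Type*} [MeasurableSpace X] {μ : Measure X} {u v : ℤ → X → ℝ} {K : ℝ}
    (hu : ∀ m, MemLp (u m) 2 μ) (hv : ∀ m, MemLp (v m) 2 μ)
    (huK : ∀ m, ∫ t, u m t ^ 2 ∂μ ≤ K) (hvK : ∀ m, ∫ t, v m t ^ 2 ∂μ ≤ K) :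
    IsSchurMultiplier.{u} fun m n => ∫ t, u m t * v n t ∂μ := by
  refine ⟨K, (integral_nonneg fun t => sq_nonneg (u 0 t)).trans (huK 0),
    fun H _ _ _ P hP b => ?_⟩
  obtain ⟨c, hcK, hc⟩ := exists_weak_limit_of_norm_le (Ultrafilter.of (atTop : Filter (Finset ℤ)))
    _ _ (norm_sum_le hu hv huK hvK hP b)
  refine ⟨c, fun m n => ContinuousLinearMap.ext fun y => ext_inner_right ℂ fun x => ?_, hcK⟩
  simp only [ContinuousLinearMap.comp_apply, _root_.smul_apply, hP.inner_left]
  refine tendsto_nhds_unique (hc _ _) (tendsto_const_nhds.congr' ?_)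
  refine (Ultrafilter.of_le atTop) ?_
  filter_upwards [eventually_ge_atTop {m, n}] with F hF
  have hm : m ∈ F := hF (by simp)
  have hn : n ∈ F := hF (by simp)
  simp only [_root_.sum_apply, _root_.smul_apply, sum_inner,
      inner_smul_left, ContinuousLinearMap.comp_apply, hP.inner_left, hP.apply_apply]
  rw [Finset.sum_eq_single_of_mem m hm fun k _ hk => Finset.sum_eq_zero fun l _ => by simp [hk],
    Finset.sum_eq_single_of_mem n hn fun k _ hk => by simp [hk]]
  simp

/-- Kernels `∫ u m * v n` remain Schur multipliers after multiplication by bounded rows and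
columns. -/
lemma of_integral_mul {X : Type*} [MeasurableSpace X] {μ : Measure X} {u v : ℤ → X → ℝ} {K : ℝ}
    {p q : ℤ → ℝ} (hp : ∀ m, |p m| ≤ 1) (hq : ∀ m, |q m| ≤ 1)
    (hu : ∀ m, MemLp (u m) 2 μ) (hv : ∀ m, MemLp (v m) 2 μ)
    (huK : ∀ m, ∫ t, u m t ^ 2 ∂μ ≤ K) (hvK : ∀ m, ∫ t, v m t ^ 2 ∂μ ≤ K) :
    IsSchurMultiplier.{u} fun m n => p m * q n * ∫ t, u m t * v n t ∂μ := by
  have aux : ∀ {p : ℤ → ℝ} {w : ℤ → X → ℝ}, (∀ m, |p m| ≤ 1) → (∀ m, ∫ t, w m t ^ 2 ∂μ ≤ K) →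
      ∀ m, ∫ t, (p m * w m t) ^ 2 ∂μ ≤ K := fun {p w} hp hw m => by
    simp_rw [mul_pow]
    rw [integral_const_mul]
    exact (mul_le_of_le_one_left (integral_nonneg fun t => sq_nonneg _)
      ((sq_le_one_iff_abs_le_one _).2 (hp m))).trans (hw m)
  convert of_integral.{u} (fun m => (hu m).const_mul (p m)) (fun m => (hv m).const_mul (q m))
    (aux hp huK) (aux hq hvK) using 3 with m n
  rw [← integral_const_mul]
  congr with t
  ring

end IsSchurMultiplier

lemma memLp_rpow_mul_exp {s x : ℝ} (hs : -1 < s) (hx : 0 < x) :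
    MemLp (fun t : ℝ => t ^ (s / 2) * exp (-(x * t))) 2 (volume.restrict (Ioi 0)) ∧
      ∫ t in Ioi (0 : ℝ), (t ^ (s / 2) * exp (-(x * t))) ^ 2 =
        (1 / (2 * x)) ^ (s + 1) * Gamma (s + 1) := by
  have hsq : ∀ t ∈ Ioi (0 : ℝ), (t ^ (s / 2) * exp (-(x * t))) ^ 2 =
      t ^ (s + 1 - 1) * exp (-(2 * x * t)) := fun t ht => by
    rw [mul_pow, ← rpow_mul_natCast ht.le, ← exp_nat_mul]
    congr 2 <;> push_cast <;> ring
  refine ⟨(memLp_two_iff_integrable_sq ?_).2 ?_, ?_⟩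
  · exact Measurable.aestronglyMeasurable (by fun_prop)
  · refine IntegrableOn.congr_fun (integrableOn_rpow_mul_exp_neg_mul_rpow hs one_pos
      (show 0 < 2 * x by positivity)) (fun t ht => ?_) measurableSet_Ioi
    simp only [hsq t ht, rpow_one]
    congr 2 <;> ring
  · rw [setIntegral_congr_fun measurableSet_Ioi hsq,
      integral_rpow_mul_exp_neg_mul_Ioi (by linarith) (by positivity)]

lemma isSchurMultiplier_rpow_div_add {α : ℝ} (hα0 : 0 < α) (hα1 : α < 1) {p q r : ℤ → ℝ}
    (hp : ∀ m, |p m| ≤ 1) (hq : ∀ m, |q m| ≤ 1) (hr : ∀ m, 1 ≤ r m) :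
    IsSchurMultiplier.{u} (fun m n => p m * q n * (r m ^ α / (r m + r n))) ∧
      IsSchurMultiplier.{u} (fun m n => p m * q n * (r n ^ α / (r m + r n))) := by
  have hr0 : ∀ m, 0 < r m := fun m => one_pos.trans_le (hr m)
  have hΓ₁ := Gamma_pos_of_pos (show 0 < α + 1 by linarith)
  have hΓ₂ := Gamma_pos_of_pos (show 0 < -α + 1 by linarith)
  set v : ℤ → ℝ → ℝ := fun m t => t ^ (-α / 2) * exp (-(r m * t))
  set w : ℤ → ℝ → ℝ := fun m t => r m ^ α * (t ^ (α / 2) * exp (-(r m * t)))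
  have hv := fun m => memLp_rpow_mul_exp (s := -α) (by linarith) (hr0 m)
  have hw := fun m => memLp_rpow_mul_exp (s := α) (by linarith) (hr0 m)
  have hvK : ∀ m, ∫ t in Ioi (0 : ℝ), v m t ^ 2 ≤ Gamma (α + 1) + Gamma (-α + 1) := fun m => by
    refine (hv m).2.trans_le ?_
    have : (1 / (2 * r m)) ^ (-α + 1) ≤ 1 := rpow_le_one (by have := hr0 m; positivity)
      ((div_le_one (by linarith [hr0 m])).2 (by linarith [hr m])) (by linarith)
    nlinarith
  have hwK : ∀ m, ∫ t in Ioi (0 : ℝ), w m t ^ 2 ≤ Gamma (α + 1) + Gamma (-α + 1) := fun m => by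
    simp_rw [w, mul_pow (r m ^ α)]
    rw [integral_const_mul, (hw m).2, ← mul_assoc]
    have h0 := hr0 m
    have : (r m ^ α) ^ 2 * (1 / (2 * r m)) ^ (α + 1) ≤ 1 := by
      calc _ ≤ (r m ^ α) ^ 2 * (1 / r m) ^ (α + 1) := by
            gcongr
            linarith
        _ = r m ^ (α - 1) := by
            rw [one_div, inv_rpow h0.le, ← rpow_neg h0.le, ← rpow_mul_natCast h0.le,
              ← rpow_add h0]
            congr 1
            push_cast
            ring
        _ ≤ 1 := rpow_le_one_of_one_le_of_nonpos (hr m) (by linarith)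
    nlinarith
  have hvw : ∀ m n, ∫ t in Ioi (0 : ℝ), w m t * v n t = r m ^ α / (r m + r n) := fun m n => by
    have : ∀ t ∈ Ioi (0 : ℝ), w m t * v n t = r m ^ α * exp (-(r m + r n) * t) := fun t ht => by
      have h1 : t ^ (α / 2) * t ^ (-α / 2) = 1 := by
        rw [← rpow_add ht]
        simp [neg_div]
      have h2 : exp (-(r m + r n) * t) = exp (-(r m * t)) * exp (-(r n * t)) := by
        rw [← exp_add]
        congr 1
        ring
      rw [h2]
      linear_combination (r m ^ α * exp (-(r m * t)) * exp (-(r n * t))) * h1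
    rw [setIntegral_congr_fun measurableSet_Ioi this, integral_const_mul,
      integral_exp_mul_Ioi (by linarith [hr0 m, hr0 n])]
    rw [mul_zero, exp_zero, neg_div_neg_eq, mul_one_div]
  constructor
  · convert IsSchurMultiplier.of_integral_mul.{u} hp hq (fun m => (hw m).1.const_mul (r m ^ α))
      (fun m => (hv m).1) hwK hvK using 4 with m n
    exact (hvw m n).symm
  · convert IsSchurMultiplier.of_integral_mul.{u} hp hq (fun m => (hv m).1)
      (fun m => (hw m).1.const_mul (r m ^ α)) hvK hwK using 4 with m n
    rw [add_comm, ← hvw n m]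
    congr with t
    exact mul_comm _ _

lemma isSchurMultiplier_rpow_divided_difference {α : ℝ} (hα0 : 0 < α) (hα1 : α < 1) :
    ∃ κ : ℝ → ℝ → ℝ, (∀ x y, 1 ≤ x → 1 ≤ y → (x - y) * κ x y = x ^ α - y ^ α) ∧
      ∀ p q r : ℤ → ℝ, (∀ m, |p m| ≤ 1) → (∀ m, |q m| ≤ 1) → (∀ m, 1 ≤ r m) →
        IsSchurMultiplier.{u} fun m n => p m * q n * κ (r m) (r n) := by
  have hα : α ∈ Ioo (0 : ℝ) 1 := ⟨hα0, hα1⟩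
  set C := ∫ t in Ioi (0 : ℝ), rpowIntegrand₀₁ α t 1 with hC
  have hCpos : 0 < C := lt_of_lt_of_le (div_pos_of_neg_of_neg (by norm_num) (by linarith))
    (le_integral_rpowIntegrand₀₁_one hα)
  set w : ℝ → ℝ → ℝ := fun x t => t ^ (α / 2) / (x + t)
  have hsq : ∀ t ∈ Ioi (0 : ℝ), t ^ (α / 2) * t ^ (α / 2) = t ^ α := fun t ht => by
    rw [← rpow_add ht]
    congr 1
    ring
  have hle : ∀ x, 1 ≤ x → ∀ t ∈ Ioi (0 : ℝ), w x t ^ 2 ≤ rpowIntegrand₀₁ α t 1 :=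
    fun x hx t (ht : 0 < t) => by
      have h1 : w x t ^ 2 = t ^ α * (1 / (x + t) ^ 2) := by
        rw [← hsq t ht]
        simp only [w]
        field_simp
      have h2 : rpowIntegrand₀₁ α t 1 = t ^ α * (1 / (t * (t + 1))) := by
        rw [rpowIntegrand₀₁]
        congr 1
        field_simp
        ring
      rw [h1, h2]
      gcongr
      nlinarith
  have hint1 := integrableOn_rpowIntegrand₀₁_Ioi hα zero_le_one
  have hmeas : ∀ x, AEStronglyMeasurable (w x) (volume.restrict (Ioi 0)) := fun x =>
    Measurable.aestronglyMeasurable (by fun_prop)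
  have hint : ∀ x, 1 ≤ x → IntegrableOn (fun t => w x t ^ 2) (Ioi 0) := fun x hx =>
    Integrable.mono' hint1 ((hmeas x).pow 2) <| by
      filter_upwards [ae_restrict_mem measurableSet_Ioi] with t ht
      rw [norm_of_nonneg (sq_nonneg _)]
      exact hle x hx t ht
  refine ⟨fun x y => C⁻¹ * ∫ t in Ioi (0 : ℝ), w x t * w y t, fun x y hx hy => ?_,
    fun p q r hp hq hr => ?_⟩
  · have hx0 : 0 ≤ x := zero_le_one.trans hx
    have hy0 : 0 ≤ y := zero_le_one.trans hy
    have : ∀ t ∈ Ioi (0 : ℝ), (x - y) * (w x t * w y t) =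
        rpowIntegrand₀₁ α t x - rpowIntegrand₀₁ α t y := fun t ht => by
      have ht' : 0 < t := ht
      simp only [w, rpowIntegrand₀₁, ← hsq t ht]
      field_simp
      ring
    have h := setIntegral_congr_fun (μ := volume) measurableSet_Ioi this
    rw [integral_const_mul, integral_sub (integrableOn_rpowIntegrand₀₁_Ioi hα hx0)
      (integrableOn_rpowIntegrand₀₁_Ioi hα hy0),
      integral_rpowIntegrand₀₁_eq_rpow_mul_const hα hx0,
      integral_rpowIntegrand₀₁_eq_rpow_mul_const hα hy0, ← hC] at h
    rw [mul_left_comm, h]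
    field_simp
  · have hL : ∀ m, MemLp (w (r m)) 2 (volume.restrict (Ioi 0)) := fun m =>
      (memLp_two_iff_integrable_sq (hmeas _)).2 (hint _ (hr m))
    have hK : ∀ m, ∫ t in Ioi (0 : ℝ), w (r m) t ^ 2 ≤ C := fun m =>
      setIntegral_mono_on (hint _ (hr m)) hint1 measurableSet_Ioi (hle _ (hr m))
    convert (IsSchurMultiplier.of_integral_mul.{u} hp hq hL hL hK hK).const_mul C⁻¹ using 3
    ring

lemma isSchurMultiplier_mul {p q : ℤ → ℝ} (hp : ∀ m, |p m| ≤ 1) (hq : ∀ m, |q m| ≤ 1) :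
    IsSchurMultiplier.{u} fun m n => p m * q n := by
  simpa using IsSchurMultiplier.of_integral_mul.{u} (μ := Measure.dirac ()) (u := fun _ _ => 1)
    (v := fun _ _ => 1) (K := 1) hp hq (fun _ => memLp_const 1) (fun _ => memLp_const 1)
    (by simp) (by simp)

/-- The divided differences of `|x| ^ α` on `ℤ`, suitably extended to the diagonal, form a
bounded Schur multiplier. -/
lemma exists_isSchurMultiplier_abs_rpow {α : ℝ} (hα0 : 0 < α) (hα1 : α < 1) :
    ∃ M : ℤ → ℤ → ℝ, IsSchurMultiplier.{u} M ∧
      ∀ m n : ℤ, M m n * (m - n) = |(m : ℝ)| ^ α - |(n : ℝ)| ^ α := by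
  obtain ⟨κ, hκ, hκS⟩ := isSchurMultiplier_rpow_divided_difference.{u} hα0 hα1
  let r : ℤ → ℝ := fun m => max |(m : ℝ)| 1
  let s : ℤ → ℝ := fun m => m.sign
  let e : ℤ → ℝ := fun m => |s m|
  let z : ℤ → ℝ := fun m => if m = 0 then 1 else 0
  let f : ℤ → ℝ := fun m => s m * r m ^ (α - 1)
  have htri : ∀ m : ℤ, (m = 0 ∧ s m = 0 ∧ e m = 0 ∧ z m = 1) ∨
      ((1 : ℝ) ≤ m ∧ |(m : ℝ)| = m ∧ r m = m ∧ s m = 1 ∧ e m = 1 ∧ z m = 0) ∨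
      ((1 : ℝ) ≤ -m ∧ |(m : ℝ)| = -m ∧ r m = -m ∧ s m = -1 ∧ e m = 1 ∧ z m = 0) := fun m => by
    rcases lt_trichotomy m 0 with h | h | h
    · have h1 : (1 : ℝ) ≤ -m := by exact_mod_cast (by omega : 1 ≤ -m)
      have h2 : |(m : ℝ)| = -m := abs_of_neg (by linarith)
      exact Or.inr (Or.inr ⟨h1, h2, by simp [r, h2, h1], by simp [s, Int.sign_eq_neg_one_of_neg h],
        by simp [e, s, Int.sign_eq_neg_one_of_neg h], by simp [z, h.ne]⟩)
    · subst h
      simp [s, e, z]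
    · have h1 : (1 : ℝ) ≤ m := by exact_mod_cast h
      have h2 : |(m : ℝ)| = m := abs_of_pos (by linarith)
      exact Or.inr (Or.inl ⟨h1, h2, by simp [r, h2, h1], by simp [s, Int.sign_eq_one_of_pos h],
        by simp [e, s, Int.sign_eq_one_of_pos h], by simp [z, h.ne']⟩)
  have hr : ∀ m, 1 ≤ r m := fun m => le_max_right _ _
  have hs : ∀ m, |s m| ≤ 1 := fun m => by
    rcases htri m with h | h | h <;> simp [h.2]
  have he : ∀ m, |e m| ≤ 1 := fun m => by simpa [e] using hs m
  have hz : ∀ m, |z m| ≤ 1 := fun m => by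
    rcases htri m with h | h | h <;> simp [h.2]
  have hf : ∀ m, |f m| ≤ 1 := fun m => by
    have h0 : 0 ≤ r m := zero_le_one.trans (hr m)
    rw [abs_mul, abs_of_nonneg (rpow_nonneg h0 _)]
    exact mul_le_one₀ (hs m) (rpow_nonneg h0 _)
      (rpow_le_one_of_one_le_of_nonpos (hr m) (by linarith))
  have hse := isSchurMultiplier_rpow_div_add.{u} hα0 hα1 hs he hr
  have hes := isSchurMultiplier_rpow_div_add.{u} hα0 hα1 he hs hr
  refine ⟨_, ((((((hκS s e r hs he hr).add (hκS e s r he hs hr)).add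
    (hse.1.add (hes.1.const_mul (-1)))).add ((hse.2.const_mul (-1)).add hes.2)).const_mul
    (1 / 2)).add (isSchurMultiplier_mul.{u} hf hz)).add (isSchurMultiplier_mul.{u} hz hf),
    fun m n => ?_⟩
  have hpow : ∀ x : ℝ, 1 ≤ x → x ^ (α - 1) * x = x ^ α := fun x hx => by
    rw [rpow_sub_one (by positivity), div_mul_cancel₀ _ (by positivity)]
  simp only [f]
  rcases htri m with ⟨rfl, h2, h3, h4⟩ | ⟨h1, h2, h3, h4, h5, h6⟩ | ⟨h1, h2, h3, h4, h5, h6⟩ <;>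
  rcases htri n with ⟨rfl, k2, k3, k4⟩ | ⟨k1, k2, k3, k4, k5, k6⟩ | ⟨k1, k2, k3, k4, k5, k6⟩
  · simp [h2]
  · simp only [Int.cast_zero, abs_zero, zero_rpow hα0.ne', *]
    linear_combination -hpow _ k1
  · simp only [Int.cast_zero, abs_zero, zero_rpow hα0.ne', *]
    linear_combination -hpow _ k1
  · simp only [Int.cast_zero, abs_zero, zero_rpow hα0.ne', *]
    linear_combination hpow _ h1
  · simp only [*]
    linear_combination hκ _ _ h1 k1
  · simp only [*]
    have : (m : ℝ) + -n ≠ 0 := by linarith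
    field_simp
    ring
  · simp only [Int.cast_zero, abs_zero, zero_rpow hα0.ne', *]
    linear_combination hpow _ h1
  · simp only [*]
    have : -(m : ℝ) + n ≠ 0 := by linarith
    field_simp
    ring
  · simp only [*]
    linear_combination hκ _ _ h1 k1

end

/-- **Commutator estimate for fractional powers of an operator with integer spectrum.**
For `0 < α < 1` there is a constant `C_α > 0` such that for any family `(P n)_{n ∈ ℤ}` of
mutually orthogonal projections on a complex Hilbert space summing (strongly) to the
identity, and any bounded operators `a, b` with `P m b P n = (m − n) P m a P n`
(i.e. `b = [T, a]` for `T = ∑ n P n`), there is a bounded operator `c` with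
`P m c P n = (|m|^α − |n|^α) P m a P n` (i.e. `c = [|T|^α, a]`) and `‖c‖ ≤ C_α ‖b‖`. -/
theorem fractional_power_commutator_bound (α : ℝ) (hα0 : 0 < α) (hα1 : α < 1) :
    ∃ C : ℝ, 0 < C ∧
      ∀ (H : Type u) [NormedAddCommGroup H] [InnerProductSpace ℂ H] [CompleteSpace H]
        (P : ℤ → H →L[ℂ] H),
        (∀ n, ContinuousLinearMap.adjoint (P n) = P n) →
        (∀ n, P n ∘L P n = P n) →
        (∀ m n, m ≠ n → P m ∘L P n = 0) →
        (∀ x : H, HasSum (fun n => P n x) x) →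
        ∀ a b : H →L[ℂ] H,
          (∀ m n : ℤ, P m ∘L b ∘L P n = (((m - n : ℤ) : ℂ)) • (P m ∘L a ∘L P n)) →
          ∃ c : H →L[ℂ] H,
            (∀ m n : ℤ, P m ∘L c ∘L P n =
              ((((|(m : ℝ)| ^ α - |(n : ℝ)| ^ α : ℝ) : ℂ))) • (P m ∘L a ∘L P n)) ∧
            ‖c‖ ≤ C * ‖b‖ := by
  obtain ⟨M, ⟨K, hK, hS⟩, hM⟩ := exists_isSchurMultiplier_abs_rpow.{u} hα0 hα1
  refine ⟨K + 1, by positivity, fun H _ _ _ P h₁ h₂ h₃ _ a b hab => ?_⟩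
  obtain ⟨c, hc, hcK⟩ := hS H P ⟨h₁, h₂, h₃⟩ b
  refine ⟨c, fun m n => ?_, hcK.trans (by gcongr; linarith)⟩
  rw [hc, hab, smul_smul, ← hM]
  push_cast
  rfl
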